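/- Let ≼ be a comparative probability order on [n]. Then the set C(≼) = {χ_B − χ_A : A, B ⊆ [n], A ≼ B} is a discrete cone in {−1,0,1}ⁿ; that is: (D1) C(≼) contains each standard basis vector e₁,…,e_n; (D2) 0 ∈ C(≼) and for every nonzero x ∈ {−1,0,1}ⁿ exactly one of x and −x belongs to C(≼); (D3) if x, y ∈ C(≼) and x + y ∈ {−1,0,1}ⁿ, then x + y ∈ C(≼). -/

import Mathlib

open Finset

/-- The strict part of a (total antisymmetric) order on subsets. -/
def cpLT {n : ℕ} (le : Finset (Fin n) → Finset (Fin n) → Prop)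
    (A B : Finset (Fin n)) : Prop :=
  le A B ∧ A ≠ B

/-- `le` is a comparative probability order on `[n]`: a linear (total,
antisymmetric, transitive) order on the powerset of `[n]` with `∅ ≺ A` for
nonempty `A`, satisfying de Finetti's axiom. -/
def IsCPO {n : ℕ} (le : Finset (Fin n) → Finset (Fin n) → Prop) : Prop :=
  (∀ A B, le A B ∨ le B A) ∧
  (∀ A B, le A B → le B A → A = B) ∧
  (∀ A B C, le A B → le B C → le A C) ∧
  (∀ A : Finset (Fin n), A ≠ ∅ → cpLT le ∅ A) ∧
  (∀ A B C : Finset (Fin n), Disjoint (A ∪ B) C → (le A B ↔ le (A ∪ C) (B ∪ C)))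

/-- `(A,B)` is a critical pair: disjoint, `A ≺ B`, and no `C` with `A ≺ C ≺ B`. -/
def Critical {n : ℕ} (le : Finset (Fin n) → Finset (Fin n) → Prop)
    (A B : Finset (Fin n)) : Prop :=
  Disjoint A B ∧ cpLT le A B ∧ ¬ ∃ C, cpLT le A C ∧ cpLT le C B

/-- `(A,B)` is a flippable pair: critical, and for every `D` disjoint from
`A ∪ B` the pair `(A ∪ D, B ∪ D)` is adjacent. -/
def Flippable {n : ℕ} (le : Finset (Fin n) → Finset (Fin n) → Prop)
    (A B : Finset (Fin n)) : Prop :=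
  Critical le A B ∧
  ∀ D : Finset (Fin n), Disjoint D (A ∪ B) →
    ¬ ∃ C, cpLT le (A ∪ D) C ∧ cpLT le C (B ∪ D)

/-- The set of flippable pairs of an order. -/
def FlippablePairs {n : ℕ} (le : Finset (Fin n) → Finset (Fin n) → Prop) :
    Set (Finset (Fin n) × Finset (Fin n)) :=
  {p | Flippable le p.1 p.2}

/-- `le` is (additively) representable by a positive utility vector. -/
def Representable {n : ℕ} (le : Finset (Fin n) → Finset (Fin n) → Prop) : Prop :=
  ∃ u : Fin n → ℝ, (∀ i, 0 < u i) ∧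
    ∀ A B : Finset (Fin n), le A B ↔ ∑ i ∈ A, u i ≤ ∑ i ∈ B, u i

/-- `(X, Y) = (A ∪ D, B ∪ D)` for some `D` disjoint from `A ∪ B`. -/
def FlipRel {n : ℕ} (A B X Y : Finset (Fin n)) : Prop :=
  ∃ D : Finset (Fin n), Disjoint D (A ∪ B) ∧ X = A ∪ D ∧ Y = B ∪ D

/-- The relation obtained from `le` by flipping over the pair `(A,B)`:
all comparisons between `A ∪ D` and `B ∪ D` (for `D` disjoint from `A ∪ B`)
are reversed, all other comparisons are kept. -/
def flipOrder {n : ℕ} (le : Finset (Fin n) → Finset (Fin n) → Prop)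
    (A B : Finset (Fin n)) : Finset (Fin n) → Finset (Fin n) → Prop :=
  fun X Y => (le X Y ∧ ¬ FlipRel A B X Y) ∨ FlipRel A B Y X

/-- Utility (sum of weights) of a subset. -/
def usum {k : ℕ} (m : Fin k → ℕ) (A : Finset (Fin k)) : ℕ := ∑ i ∈ A, m i

/-- The order on subsets induced by a utility vector. -/
def uord {k : ℕ} (m : Fin k → ℕ) : Finset (Fin k) → Finset (Fin k) → Prop :=
  fun A B => usum m A ≤ usum m B

/-- Characteristic vector of a subset of `[n]`. -/
def chi {n : ℕ} (S : Finset (Fin n)) : Fin n → ℤ := fun i => if i ∈ S then 1 else 0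

/-- The discrete cone of an order: all vectors `χ_B − χ_A` with `A ≼ B`. -/
def cone {n : ℕ} (le : Finset (Fin n) → Finset (Fin n) → Prop) : Set (Fin n → ℤ) :=
  {x | ∃ A B : Finset (Fin n), le A B ∧ x = chi B - chi A}

/-! A vector `χ(A, B)` determines exactly `A \ B` and `B \ A`, and de Finetti's axiom says that
these determine the comparison of `A` with `B`; hence `χ(A, B) ∈ C(≼) ↔ A ≼ B`, and (D2) is
totality and antisymmetry of `≼`. For (D3), let `A ≼ B` and `C ≼ D` be disjoint pairs. If
`χ(A, B) + χ(C, D)` has entries in `{-1, 0, 1}`, then `A ∩ C = ∅ = B ∩ D`, so de Finetti's axiom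
gives `A ∪ (C \ B) ≼ B ∪ C ≼ D ∪ (B \ C)`, and the outer two sets differ by the required sum. -/

/-- De Finetti's axiom for a relation on a generalized Boolean algebra: adjoining or deleting a
common part disjoint from both sides does not change a comparison. -/
def DeFinetti {β : Type*} [GeneralizedBooleanAlgebra β] (le : β → β → Prop) : Prop :=
  ∀ a b c, Disjoint (a ⊔ b) c → (le a b ↔ le (a ⊔ c) (b ⊔ c))

section DeFinetti

variable {β : Type*} [GeneralizedBooleanAlgebra β] {le : β → β → Prop} {a b c d : β}

theorem DeFinetti.sdiff_iff (h : DeFinetti le) : le (a \ b) (b \ a) ↔ le a b := by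
  have hdisj : Disjoint (a \ b ⊔ b \ a) (a ⊓ b) :=
    disjoint_sup_left.2 ⟨disjoint_inf_sdiff.symm, inf_comm b a ▸ disjoint_inf_sdiff.symm⟩
  simpa only [sup_comm _ (a ⊓ b), sup_inf_sdiff, inf_comm a b ▸ sup_inf_sdiff b a]
    using h (a \ b) (b \ a) (a ⊓ b) hdisj

theorem DeFinetti.sup_sdiff [IsTrans β le] (h : DeFinetti le) (hab : le a b) (hcd : le c d)
    (hac : Disjoint a c) (hbd : Disjoint b d) : le (a ⊔ c \ b) (d ⊔ b \ c) := by
  have hleft : le (a ⊔ c \ b) (b ⊔ c \ b) :=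
    (h a b _ (disjoint_sup_left.2 ⟨hac.mono_right sdiff_le, disjoint_sdiff_self_right⟩)).1 hab
  have hright : le (c ⊔ b \ c) (d ⊔ b \ c) :=
    (h c d _ (disjoint_sup_left.2 ⟨disjoint_sdiff_self_right, hbd.symm.mono_right sdiff_le⟩)).1 hcd
  rw [sup_sdiff_self_right] at hleft hright
  exact trans_of le hleft (sup_comm c b ▸ hright)

end DeFinetti

/-- The vectors with all entries in `{-1, 0, 1}`. -/
def IsTernary {α : Type*} (x : α → ℤ) : Prop :=
  ∀ i, x i = -1 ∨ x i = 0 ∨ x i = 1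

theorem IsTernary.neg {α : Type*} {x : α → ℤ} (hx : IsTernary x) : IsTernary (-x) := fun i => by
  rcases hx i with hi | hi | hi <;> simp [hi]

/-- A discrete cone in `{-1, 0, 1}^α`. Over an infinite index type its elements, and the vectors
considered in (D2), are those of finite support. -/
structure IsDiscreteCone {α : Type*} [DecidableEq α] (K : Set (α → ℤ)) : Prop where
  isTernary : ∀ x ∈ K, IsTernary x
  finite_support : ∀ x ∈ K, x.support.Finite
  single_mem : ∀ i, Pi.single i 1 ∈ K
  zero_mem : 0 ∈ K
  xor_neg_mem : ∀ x, IsTernary x → x.support.Finite → x ≠ 0 → Xor (x ∈ K) (-x ∈ K)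
  add_mem : ∀ x ∈ K, ∀ y ∈ K, IsTernary (x + y) → x + y ∈ K

section CharDiff

variable {α : Type*} [DecidableEq α] {A B C D : Finset α}

/-- The vector `χ(A, B) = χ_B - χ_A` comparing `A` with `B`. -/
def charDiff (A B : Finset α) : α → ℤ :=
  fun i => (if i ∈ B then 1 else 0) - (if i ∈ A then 1 else 0)

theorem charDiff_self (A : Finset α) : charDiff A A = 0 :=
  funext fun _ => sub_self _

theorem charDiff_empty_singleton (i : α) : charDiff ∅ {i} = Pi.single i 1 := by
  ext j
  simp [charDiff, Pi.single_apply]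

theorem neg_charDiff (A B : Finset α) : -charDiff A B = charDiff B A :=
  funext fun _ => neg_sub _ _

theorem isTernary_charDiff (A B : Finset α) : IsTernary (charDiff A B) := fun i => by
  by_cases i ∈ A <;> by_cases i ∈ B <;> simp [charDiff, *]

theorem finite_support_charDiff (A B : Finset α) : (charDiff A B).support.Finite := by
  refine (A ∪ B).finite_toSet.subset fun i hi => ?_
  contrapose! hi
  simp_all [charDiff]

theorem charDiff_apply_eq_one {i : α} : charDiff A B i = 1 ↔ i ∈ B \ A := by
  by_cases i ∈ A <;> by_cases i ∈ B <;> simp [charDiff, *]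

theorem charDiff_sdiff (A B : Finset α) : charDiff (A \ B) (B \ A) = charDiff A B := by
  ext i
  by_cases i ∈ A <;> by_cases i ∈ B <;> simp [charDiff, *]

theorem sdiff_eq_of_charDiff_eq (h : charDiff A B = charDiff C D) : B \ A = D \ C := by
  ext i
  simp only [← charDiff_apply_eq_one, h]

theorem IsTernary.exists_charDiff_eq {x : α → ℤ} (hx : IsTernary x) (hfin : x.support.Finite) :
    ∃ A B : Finset α, charDiff A B = x := by
  refine ⟨{i ∈ hfin.toFinset | x i = -1}, {i ∈ hfin.toFinset | x i = 1}, funext fun i => ?_⟩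
  rcases hx i with hi | hi | hi <;> simp [charDiff, hi]

theorem disjoint_of_isTernary_charDiff_add (hAB : Disjoint A B) (hCD : Disjoint C D)
    (h : IsTernary (charDiff A B + charDiff C D)) : Disjoint B D := by
  refine disjoint_left.2 fun i hB hD => ?_
  have hsum : (charDiff A B + charDiff C D) i = 2 := by
    simp [charDiff, hB, hD, disjoint_right.1 hAB hB, disjoint_right.1 hCD hD]
  have := h i
  lia

theorem charDiff_add (hAC : Disjoint A C) (hBD : Disjoint B D) :
    charDiff A B + charDiff C D = charDiff (A ∪ C \ B) (D ∪ B \ C) := by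
  ext i
  have hiAC : i ∈ A → i ∉ C := (disjoint_left.1 hAC ·)
  have hiBD : i ∈ B → i ∉ D := (disjoint_left.1 hBD ·)
  by_cases i ∈ A <;> by_cases i ∈ B <;> by_cases i ∈ C <;> by_cases i ∈ D <;>
    simp_all [charDiff]

end CharDiff

section DifferenceCone

variable {α : Type*} [DecidableEq α] {le : Finset α → Finset α → Prop} {A B : Finset α}

/-- The set `C(≼)` of all `χ(A, B)` with `A ≼ B`, for a relation on the finite subsets of an
arbitrary type. -/
def differenceCone (le : Finset α → Finset α → Prop) : Set (α → ℤ) :=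
  {x | ∃ A B, le A B ∧ x = charDiff A B}

theorem charDiff_mem_differenceCone (hAB : le A B) : charDiff A B ∈ differenceCone le :=
  ⟨A, B, hAB, rfl⟩

theorem DeFinetti.charDiff_mem_differenceCone_iff (h : DeFinetti le) :
    charDiff A B ∈ differenceCone le ↔ le A B := by
  refine ⟨?_, charDiff_mem_differenceCone⟩
  rintro ⟨C, D, hCD, heq⟩
  have hright : B \ A = D \ C := sdiff_eq_of_charDiff_eq heq
  have hleft : A \ B = C \ D := sdiff_eq_of_charDiff_eq <| by
    rw [← neg_charDiff, heq, neg_charDiff]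
  rwa [← h.sdiff_iff, hleft, hright, h.sdiff_iff]

theorem DeFinetti.exists_disjoint_of_mem_differenceCone (h : DeFinetti le) {x : α → ℤ}
    (hx : x ∈ differenceCone le) : ∃ A B, Disjoint A B ∧ le A B ∧ x = charDiff A B := by
  obtain ⟨A, B, hAB, rfl⟩ := hx
  exact ⟨A \ B, B \ A, disjoint_sdiff_sdiff, h.sdiff_iff.2 hAB, (charDiff_sdiff A B).symm⟩

theorem DeFinetti.xor_neg_mem_differenceCone [Std.Total le] [Std.Antisymm le] (h : DeFinetti le)
    {x : α → ℤ} (hx : IsTernary x) (hfin : x.support.Finite) (hx0 : x ≠ 0) :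
    Xor (x ∈ differenceCone le) (-x ∈ differenceCone le) := by
  obtain ⟨A, B, rfl⟩ := hx.exists_charDiff_eq hfin
  have hne : A ≠ B := by
    rintro rfl
    exact hx0 (charDiff_self A)
  rw [neg_charDiff, h.charDiff_mem_differenceCone_iff, h.charDiff_mem_differenceCone_iff,
    xor_iff_or_and_not_and]
  exact ⟨total_of le A B, fun ⟨hAB, hBA⟩ => hne (antisymm_of le hAB hBA)⟩

theorem DeFinetti.add_mem_differenceCone [IsTrans (Finset α) le] (h : DeFinetti le) {x y : α → ℤ}
    (hx : x ∈ differenceCone le) (hy : y ∈ differenceCone le) (hxy : IsTernary (x + y)) :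
    x + y ∈ differenceCone le := by
  obtain ⟨A, B, hdisjAB, hAB, rfl⟩ := h.exists_disjoint_of_mem_differenceCone hx
  obtain ⟨C, D, hdisjCD, hCD, rfl⟩ := h.exists_disjoint_of_mem_differenceCone hy
  have hBD : Disjoint B D := disjoint_of_isTernary_charDiff_add hdisjAB hdisjCD hxy
  have hAC : Disjoint A C := by
    refine disjoint_of_isTernary_charDiff_add hdisjAB.symm hdisjCD.symm ?_
    rw [← neg_charDiff A, ← neg_charDiff C, ← neg_add]
    exact hxy.neg
  rw [charDiff_add hAC hBD]
  exact charDiff_mem_differenceCone (h.sup_sdiff hAB hCD hAC hBD)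

theorem stmt17_general (le : Finset α → Finset α → Prop) [IsLinearOrder (Finset α) le]
    (h : DeFinetti le) (hpos : ∀ i, le ∅ {i}) : IsDiscreteCone (differenceCone le) where
  isTernary := by
    rintro _ ⟨A, B, -, rfl⟩
    exact isTernary_charDiff A B
  finite_support := by
    rintro _ ⟨A, B, -, rfl⟩
    exact finite_support_charDiff A B
  single_mem i := charDiff_empty_singleton i ▸ charDiff_mem_differenceCone (hpos i)
  zero_mem := charDiff_self (∅ : Finset α) ▸ charDiff_mem_differenceCone (refl_of le ∅)
  xor_neg_mem _ := h.xor_neg_mem_differenceCone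
  add_mem _ hx _ hy := h.add_mem_differenceCone hx hy

end DifferenceCone

section IsCPO

variable {n : ℕ} {le : Finset (Fin n) → Finset (Fin n) → Prop}

theorem IsCPO.isLinearOrder (h : IsCPO le) : IsLinearOrder (Finset (Fin n)) le where
  total := h.1
  antisymm := h.2.1
  trans := h.2.2.1
  refl A := (h.1 A A).elim id id

theorem IsCPO.deFinetti (h : IsCPO le) : DeFinetti le :=
  h.2.2.2.2

theorem IsCPO.empty_le_singleton (h : IsCPO le) (i : Fin n) : le ∅ {i} :=
  (h.2.2.2.1 {i} (singleton_ne_empty i)).1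

theorem IsCPO.isDiscreteCone (h : IsCPO le) : IsDiscreteCone (cone le) :=
  have := h.isLinearOrder
  stmt17_general le h.deFinetti h.empty_le_singleton

end IsCPO

/-- The set `C(≼) = {χ_B − χ_A : A ≼ B}` of a comparative probability order is a
discrete cone in `{−1,0,1}ⁿ`: it consists of vectors with entries in `{−1,0,1}`,
contains the standard basis vectors (D1), contains `0` and exactly one of `x`,
`−x` for each nonzero `x ∈ {−1,0,1}ⁿ` (D2), and is closed under addition within
`{−1,0,1}ⁿ` (D3). -/
theorem stmt17 {n : ℕ} (le : Finset (Fin n) → Finset (Fin n) → Prop)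
    (h : IsCPO le) :
    (∀ x ∈ cone le, ∀ i : Fin n, x i = -1 ∨ x i = 0 ∨ x i = 1) ∧
    (∀ i : Fin n, (fun j => if j = i then (1 : ℤ) else 0) ∈ cone le) ∧
    ((0 : Fin n → ℤ) ∈ cone le) ∧
    (∀ x : Fin n → ℤ, (∀ i : Fin n, x i = -1 ∨ x i = 0 ∨ x i = 1) → x ≠ 0 →
      Xor' (x ∈ cone le) (-x ∈ cone le)) ∧
    (∀ x ∈ cone le, ∀ y ∈ cone le,
      (∀ i : Fin n, x i + y i = -1 ∨ x i + y i = 0 ∨ x i + y i = 1) →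
      x + y ∈ cone le) := by
  have hK := h.isDiscreteCone
  exact ⟨hK.isTernary, fun i => funext (Pi.single_apply i (1 : ℤ)) ▸ hK.single_mem i, hK.zero_mem,
    fun x hx => hK.xor_neg_mem x hx x.support.toFinite, hK.add_mem⟩
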